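/- arXiv:2005.11666 — 2 statements merged into one kernel-verified Lean document; each statement's English description precedes it below -/
import Mathlib

section
/- The elliptic curve y² = (3x+1)(−x/3+1)(8x/3+1) (equivalently, induced by the rational Diophantine triple {3, −1/3, 8/3}) has torsion subgroup over ℚ isomorphic to ℤ/2ℤ × ℤ/4ℤ and Mordell–Weil rank 0. -/
/-!
Put `u = 9 * x - 9` and `v = 27 * y`; the curve becomes `v ^ 2 = u * (u + 1) * (u + 81)`. The
double of a point with `v ≠ 0` has `u`-coordinate `a ^ 2` with `a = (u ^ 2 - 81) / (2 * v)`, and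
then `a ^ 2 + 1` and `a ^ 2 + 81` are squares. It suffices that `a = 0` is the only such rational:
the points with `u ^ 2 = 81` or `v = 0` form an explicit group.

The `2`-adic norm `|a|` is not `1`, since then `a ^ 2 + 1` has norm `1 / 2`. As `9 / a` has the
same property as `a`, a nonzero `a` may be taken with `|a| > 1`. Halving the point above `a ^ 2`
gives a point with `u > 0`, and `|u| ≥ 1` after translation by `(0, 0)` if necessary. Local
conditions at `5`, `3` and `2` force `u = x ^ 2` with `x ^ 2 + 1` and `x ^ 2 + 81` squares, and
`|a| = 2 * |x|` with `|x| > 1`, so an infinite descent ensues.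
-/

/-- The Weierstrass model `y² = (x+ab)(x+ac)(x+bc)` of the elliptic curve
`y² = (3x+1)(−x/3+1)(8x/3+1)` induced by the rational Diophantine triple
`{3, −1/3, 8/3}` (via `(x, y) ↦ (abc·x, abc·y)`), where `a = 3`, `b = −1/3`,
`c = 8/3`, so `ab+ac+bc = 55/9`, `abc(a+b+c) = -128/9`, `(abc)² = 64`. -/
def curve10 : WeierstrassCurve.Affine ℚ :=
  { a₁ := 0, a₂ := 3 * (-1/3) + 3 * (8/3) + (-1/3) * (8/3), a₃ := 0,
    a₄ := 3 * (-1/3) * (8/3) * (3 + (-1/3) + (8/3)),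
    a₆ := (3 * (-1/3) * (8/3)) ^ 2 }

section SquareClass

lemma exists_eq_squarefree_mul_sq (n : ℤ) : ∃ d e : ℤ, Squarefree d ∧ n = d * e ^ 2 := by
  obtain ⟨d, e, hn, hd⟩ := Nat.sq_mul_squarefree n.natAbs
  have hn' : |n| = d * e ^ 2 := by
    rw [Int.abs_eq_natAbs, ← hn]
    push_cast
    ring
  rcases abs_choice n with h | h
  · exact ⟨d, e, Int.squarefree_natCast.2 hd, h.symm.trans hn'⟩
  · refine ⟨-d, e, Int.squarefree_natAbs.1 (by simpa using hd), ?_⟩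
    rw [neg_mul, ← hn', h, neg_neg]

lemma dvd_of_squarefree_mul_sq_mul_eq_sq {R : Type*} [CommRing R] [IsDomain R]
    [UniqueFactorizationMonoid R] {d e c m : R} (hd : Squarefree d) (he : e ≠ 0)
    (h : d * e ^ 2 * c = m ^ 2) : d ∣ c := by
  obtain ⟨n, rfl⟩ : e ∣ m :=
    (UniqueFactorizationMonoid.pow_dvd_pow_iff_dvd two_ne_zero).1 ⟨d * c, by rw [← h]; ring⟩
  have hn : d * c = n ^ 2 := mul_left_cancel₀ (pow_ne_zero 2 he) (by linear_combination h)
  have hdn : d ∣ n := (hd.dvd_pow_iff_dvd two_ne_zero).1 ⟨c, hn.symm⟩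
  refine (mul_dvd_mul_iff_left hd.ne_zero).1 ?_
  rw [hn, ← sq]
  exact pow_dvd_pow_of_dvd hdn 2

lemma dvd_of_isCoprime_of_dvd_mul_of_dvd_add {R : Type*} [CommRing R] {p q d a b : R}
    (h : IsCoprime p q) (hpq : d ∣ p * q) (hd : d ∣ p ^ 2 + a * (p * q) + b * q ^ 2) : d ∣ b := by
  have hdvd : d ∣ p ^ 2 + b * q ^ 2 := by
    refine (dvd_add_left (hpq.mul_left a)).1 ?_
    rwa [add_right_comm]
  have hbp : d ∣ b * p ^ 4 := by
    convert hdvd.linear_comb hpq (b * p ^ 2) (-(b ^ 2 * (p * q))) using 1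
    ring
  have hbq : d ∣ b * q ^ 4 := by
    convert hdvd.linear_comb hpq (q ^ 2) (-(p * q)) using 1
    ring
  obtain ⟨s, t, hst⟩ : IsCoprime (p ^ 4) (q ^ 4) := h.pow
  have := hbp.linear_comb hbq s t
  rwa [show s * (b * p ^ 4) + t * (b * q ^ 4) = b by linear_combination b * hst] at this

lemma exists_squarefree_dvd_eq_mul_sq {a b : ℤ} {x y : ℚ} (h : y ^ 2 = x * (x ^ 2 + a * x + b)) :
    ∃ d : ℤ, Squarefree d ∧ d ∣ b ∧ ∃ z : ℚ, x = d * z ^ 2 := by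
  rcases eq_or_ne x 0 with rfl | hx
  · exact ⟨1, squarefree_one, one_dvd b, 0, by simp⟩
  obtain ⟨d, e, hd, hde⟩ := exists_eq_squarefree_mul_sq (x.num * x.den)
  have hxd : x * x.den = x.num := Rat.mul_den_eq_num x
  have he : e ≠ 0 := by
    rintro rfl
    simp [hx] at hde
  obtain ⟨m, hm⟩ : IsSquare (d * e ^ 2 * (x.num ^ 2 + a * (x.num * x.den) + b * x.den ^ 2)) := by
    rw [← hde, ← Rat.isSquare_intCast_iff]
    refine ⟨y * x.den ^ 2, ?_⟩
    push_cast
    rw [← hxd]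
    linear_combination -(x.den : ℚ) ^ 4 * h
  refine ⟨d, hd, ?_, e / x.den, ?_⟩
  · exact dvd_of_isCoprime_of_dvd_mul_of_dvd_add (Rat.isCoprime_num_den x) ⟨_, hde⟩
      (dvd_of_squarefree_mul_sq_mul_eq_sq hd he (hm.trans (sq m).symm))
  · have hde' : (x.num : ℚ) * x.den = d * e ^ 2 := by exact_mod_cast hde
    rw [div_pow, mul_div_assoc', ← hde', ← hxd]
    field_simp

lemma not_num_eq_zero_and_den_eq_zero (p : ℕ) [Fact p.Prime] (x : ℚ) :
    ¬ ((x.num : ZMod p) = 0 ∧ (x.den : ZMod p) = 0) := by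
  rintro ⟨hnum, hden⟩
  refine (Nat.Prime.one_lt Fact.out).ne' (Nat.eq_one_of_dvd_coprimes x.reduced ?_
    ((ZMod.natCast_eq_zero_iff _ _).1 hden) : p = 1)
  exact Int.natCast_dvd.1 ((ZMod.intCast_zmod_eq_zero_iff_dvd _ _).1 hnum)

lemma isSquare_zmod_cast {k : ℤ} (h : IsSquare (k : ℚ)) (p : ℕ) : IsSquare (k : ZMod p) :=
  (Rat.isSquare_intCast_iff.1 h).map (Int.castRingHom (ZMod p))

lemma not_isSquare_three_mul_pow_four_add (z : ℚ) : ¬ IsSquare (3 * z ^ 4 + 82 * z ^ 2 + 27) := by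
  rintro ⟨r, hr⟩
  have key : ∀ m n : ZMod 5,
      IsSquare (3 * m ^ 4 + 82 * m ^ 2 * n ^ 2 + 27 * n ^ 4) → m = 0 ∧ n = 0 := by decide
  have hsq : IsSquare ((3 * z.num ^ 4 + 82 * z.num ^ 2 * z.den ^ 2 + 27 * z.den ^ 4 : ℤ) : ℚ) := by
    refine ⟨r * z.den ^ 2, ?_⟩
    push_cast
    rw [← Rat.mul_den_eq_num z]
    linear_combination (z.den : ℚ) ^ 4 * hr
  have : Fact (Nat.Prime 5) := ⟨by norm_num⟩
  refine not_num_eq_zero_and_den_eq_zero 5 z (key _ _ ?_)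
  exact_mod_cast isSquare_zmod_cast hsq 5

lemma not_isSquare_and_isSquare_five_mul_sq_add (x : ℚ) :
    ¬ (IsSquare (5 * (x ^ 2 + 1)) ∧ IsSquare (5 * (x ^ 2 + 81))) := by
  rintro ⟨h₁, h₂⟩
  have key : ∀ m n : ZMod 3,
      IsSquare (5 * (m ^ 2 + 1 * n ^ 2)) → IsSquare (5 * (m ^ 2 + 81 * n ^ 2)) → m = 0 ∧ n = 0 := by
    decide
  have hsq {k : ℤ} (h : IsSquare (5 * (x ^ 2 + k))) :
      IsSquare ((5 * (x.num ^ 2 + k * x.den ^ 2) : ℤ) : ℚ) := by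
    obtain ⟨r, hr⟩ := h
    refine ⟨r * x.den, ?_⟩
    push_cast
    rw [← Rat.mul_den_eq_num x]
    linear_combination (x.den : ℚ) ^ 2 * hr
  refine not_num_eq_zero_and_den_eq_zero 3 x (key _ _ ?_ ?_)
  · exact_mod_cast isSquare_zmod_cast (hsq (k := 1) (by exact_mod_cast h₁)) 3
  · exact_mod_cast isSquare_zmod_cast (hsq (k := 81) (by exact_mod_cast h₂)) 3

end SquareClass

/-- `a` solves Euler's problem of concordant forms for the pair `(m, n)`: `a ^ 2 + m ^ 2` and
`a ^ 2 + n ^ 2` are both squares. -/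
def IsConcordant {R : Type*} [Semiring R] (m n a : R) : Prop :=
  IsSquare (a ^ 2 + m ^ 2) ∧ IsSquare (a ^ 2 + n ^ 2)

/-- `(u, v)` is a point of the elliptic curve `v ^ 2 = u * (u + m ^ 2) * (u + n ^ 2)` whose double
has `u`-coordinate `a ^ 2`, where `a = (u ^ 2 - m ^ 2 * n ^ 2) / (2 * v)` is written without
division. -/
structure IsHalf {R : Type*} [CommRing R] (m n a u v : R) : Prop where
  equation : v ^ 2 = u * (u + m ^ 2) * (u + n ^ 2)
  double : u ^ 2 - m ^ 2 * n ^ 2 = 2 * a * v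

section Concordant

variable {K : Type*} [Field K] {m n a u v : K}

lemma IsConcordant.mul_div (ha : a ≠ 0) (h : IsConcordant m n a) :
    IsConcordant m n (m * n / a) := by
  obtain ⟨⟨b, hb⟩, ⟨c, hc⟩⟩ := h
  refine ⟨⟨m * c / a, ?_⟩, ⟨n * b / a, ?_⟩⟩ <;> field_simp
  · linear_combination m ^ 2 * hc
  · linear_combination n ^ 2 * hb

lemma IsHalf.isConcordant [NeZero (2 : K)] (hv : v ≠ 0) (h : IsHalf m n a u v) :
    IsConcordant m n a := by
  obtain ⟨heq, hdouble⟩ := h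
  obtain rfl : a = (u ^ 2 - m ^ 2 * n ^ 2) / (2 * v) := by
    field_simp
    linear_combination -hdouble
  refine ⟨⟨(u ^ 2 + 2 * m ^ 2 * u + m ^ 2 * n ^ 2) / (2 * v), ?_⟩,
    ⟨(u ^ 2 + 2 * n ^ 2 * u + m ^ 2 * n ^ 2) / (2 * v), ?_⟩⟩ <;> field_simp
  · linear_combination 4 * m ^ 2 * heq
  · linear_combination 4 * n ^ 2 * heq

/-- Translation by the `2`-torsion point `(0, 0)` does not change the double. -/
lemma IsHalf.translate (hu : u ≠ 0) (h : IsHalf m n a u v) :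
    IsHalf m n a (m ^ 2 * n ^ 2 / u) (-(m ^ 2 * n ^ 2 * v / u ^ 2)) where
  equation := by
    field_simp
    linear_combination m ^ 4 * n ^ 4 * h.equation
  double := by
    field_simp
    linear_combination -m ^ 2 * n ^ 2 * h.double

lemma IsConcordant.exists_pos_isHalf [LinearOrder K] [IsStrictOrderedRing K] (hm : m ≠ 0)
    (hn : n ≠ 0) (h : IsConcordant m n a) : ∃ u v : K, 0 < u ∧ IsHalf m n a u v := by
  have exists_root {k : K} (hk : k ≠ 0) (hs : IsSquare (a ^ 2 + k ^ 2)) :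
      ∃ b, b ^ 2 = a ^ 2 + k ^ 2 ∧ 0 < a + b := by
    obtain ⟨b, hb⟩ := hs
    have hab : a ^ 2 < |b| ^ 2 := by
      rw [sq_abs, sq b, ← hb]
      exact lt_add_of_pos_right _ (by positivity)
    exact ⟨|b|, by rw [sq_abs, sq b, hb], by linarith [(abs_lt_of_sq_lt_sq' hab (abs_nonneg b)).1]⟩
  obtain ⟨b, hb, hab⟩ := exists_root hm h.1
  obtain ⟨c, hc, hac⟩ := exists_root hn h.2
  have hum : (a + b) * (a + c) + m ^ 2 = (a + b) * (b + c) := by linear_combination -hb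
  have hun : (a + b) * (a + c) + n ^ 2 = (a + c) * (b + c) := by linear_combination -hc
  refine ⟨(a + b) * (a + c), (a + b) * (a + c) * (b + c), mul_pos hab hac, ?_, ?_⟩
  · rw [hum, hun]
    ring
  · linear_combination (c ^ 2 - a ^ 2) * hb + m ^ 2 * hc

end Concordant

section Padic

variable {p : ℕ} {x y : ℚ}

lemma ne_zero_of_padicNorm_eq_one (hx : padicNorm p x = 1) : x ≠ 0 := by
  rintro rfl
  simp at hx

variable [Fact p.Prime]

lemma padicNorm_pow (x : ℚ) (k : ℕ) : padicNorm p (x ^ k) = padicNorm p x ^ k :=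
  IsAbsoluteValue.abv_pow (padicNorm p) x k

lemma padicNorm_num_eq_one_and_padicNorm_den_eq_one (hx : padicNorm p x = 1) :
    padicNorm p x.num = 1 ∧ padicNorm p x.den = 1 := by
  have hnum : padicNorm p x.num = padicNorm p x.den := by
    rw [← Rat.mul_den_eq_num x, padicNorm.mul, hx, one_mul]
  suffices padicNorm p x.den = 1 from ⟨hnum.trans this, this⟩
  refine (padicNorm.nat_eq_one_iff _).2 fun hden ↦ ?_
  have hnum' : (p : ℤ) ∣ x.num :=
    (padicNorm.int_lt_one_iff _).1 (hnum ▸ (padicNorm.nat_lt_one_iff _).2 hden)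
  exact not_num_eq_zero_and_den_eq_zero p x
    ⟨(ZMod.intCast_zmod_eq_zero_iff_dvd _ _).2 hnum', (ZMod.natCast_eq_zero_iff _ _).2 hden⟩

lemma padicNorm_add_eq_left (h : padicNorm p y < padicNorm p x) :
    padicNorm p (x + y) = padicNorm p x := by
  rw [padicNorm.add_eq_max_of_ne h.ne', max_eq_left h.le]

lemma padicNorm_sub_eq_left (h : padicNorm p y < padicNorm p x) :
    padicNorm p (x - y) = padicNorm p x := by
  rw [sub_eq_add_neg, padicNorm_add_eq_left (by rwa [padicNorm.neg])]

end Padic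

section TwoAdic

local notation "ν" => padicNorm 2

variable {x y m n a u v : ℚ}

lemma padicNorm_two_two : ν 2 = 1 / 2 := by
  simpa using padicNorm.padicNorm_p_of_prime (p := 2)

lemma padicNorm_two_sq_ne_half_mul_sq (hx : x ≠ 0) (r : ℚ) : ν r ^ 2 ≠ 1 / 2 * ν x ^ 2 := fun h ↦ by
  have hx' : ν x ≠ 0 := padicNorm.nonzero hx
  have : IsSquare (1 / 2 : ℚ) := ⟨ν r / ν x, by field_simp; linear_combination -2 * h⟩
  norm_num at this

lemma exists_odd_div_odd_of_padicNorm_two_eq_one (hx : ν x = 1) :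
    ∃ m n : ℤ, Odd m ∧ Odd n ∧ x = m / n := by
  obtain ⟨hnum, hden⟩ := padicNorm_num_eq_one_and_padicNorm_den_eq_one hx
  rw [padicNorm.int_eq_one_iff, Nat.cast_ofNat] at hnum
  rw [padicNorm.nat_eq_one_iff] at hden
  exact ⟨x.num, x.den, by grind, by grind, by exact_mod_cast (Rat.num_div_den x).symm⟩

lemma padicNorm_two_sq_sub_one_le (hx : ν x = 1) : ν (x ^ 2 - 1) ≤ 1 / 8 := by
  obtain ⟨k, l, hk, hl, rfl⟩ := exists_odd_div_odd_of_padicNorm_two_eq_one hx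
  have hνl : ν l = 1 := (padicNorm.int_eq_one_iff l).2 (by grind)
  have hl0 := ne_zero_of_padicNorm_eq_one hνl
  have hdvd : ((2 ^ 3 : ℕ) : ℤ) ∣ k ^ 2 - l ^ 2 := by
    have := dvd_sub (Int.eight_dvd_sq_sub_one_of_odd hk) (Int.eight_dvd_sq_sub_one_of_odd hl)
    rwa [sub_sub_sub_cancel_right] at this
  have heq : (k / l : ℚ) ^ 2 - 1 = (k ^ 2 - l ^ 2 : ℤ) / l ^ 2 := by
    push_cast
    field_simp
  rw [heq, padicNorm.div, padicNorm_pow, hνl, one_pow, div_one]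
  exact (padicNorm.dvd_iff_norm_le.1 hdvd).trans (by norm_num)

lemma padicNorm_two_sq_sub_sq_le (hx : ν x = 1) (hy : ν y = 1) : ν (x ^ 2 - y ^ 2) ≤ 1 / 8 := by
  have hy0 := ne_zero_of_padicNorm_eq_one hy
  have heq : x ^ 2 - y ^ 2 = y ^ 2 * ((x / y) ^ 2 - 1) := by field_simp
  rw [heq, padicNorm.mul, padicNorm_pow, hy, one_pow, one_mul]
  exact padicNorm_two_sq_sub_one_le (by rw [padicNorm.div, hx, hy, div_one])

lemma padicNorm_two_sq_add_sq (hx : ν x = 1) (hy : ν y = 1) : ν (x ^ 2 + y ^ 2) = 1 / 2 := by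
  have h2y : ν (2 * y ^ 2) = 1 / 2 := by
    rw [padicNorm.mul, padicNorm_pow, hy, padicNorm_two_two, one_pow, mul_one]
  have heq : x ^ 2 + y ^ 2 = 2 * y ^ 2 + (x ^ 2 - y ^ 2) := by ring
  rw [heq, padicNorm_add_eq_left, h2y]
  rw [h2y]
  linarith [padicNorm_two_sq_sub_sq_le hx hy]

lemma IsConcordant.padicNorm_two_ne_one (hm : ν m = 1) (h : IsConcordant m n a) : ν a ≠ 1 := by
  intro ha
  obtain ⟨b, hb⟩ := h.1
  refine padicNorm_two_sq_ne_half_mul_sq one_ne_zero b ?_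
  rw [← padicNorm_pow, sq, ← hb, padicNorm_two_sq_add_sq ha hm, padicNorm.one]
  norm_num

lemma IsHalf.padicNorm_two_sq_eq_four_mul (hm : ν m = 1) (hn : ν n = 1) (hu : 1 < ν u)
    (h : IsHalf m n a u v) : ν a ^ 2 = 4 * ν u := by
  have hadd {k : ℚ} (hk : ν k = 1) : ν (u + k ^ 2) = ν u :=
    padicNorm_add_eq_left (by simpa [padicNorm_pow, hk])
  have hv : ν v ^ 2 = ν u ^ 3 := by
    rw [← padicNorm_pow, h.equation, padicNorm.mul, padicNorm.mul, hadd hm, hadd hn]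
    ring
  have hsub : ν u ^ 2 = 1 / 2 * ν a * ν v := by
    rw [← padicNorm_two_two, ← padicNorm.mul, ← padicNorm.mul, ← h.double, padicNorm_sub_eq_left,
      padicNorm_pow]
    simpa [padicNorm.mul, padicNorm_pow, hm, hn] using one_lt_pow₀ hu two_ne_zero
  refine mul_right_cancel₀ (pow_ne_zero 3 (zero_lt_one.trans hu).ne') ?_
  linear_combination -ν a ^ 2 * hv - 4 * (ν u ^ 2 + 1 / 2 * ν a * ν v) * hsub

lemma IsHalf.padicNorm_two_le_one (hm : ν m = 1) (hn : ν n = 1) (hx : ν x = 1)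
    (h : IsHalf m n a (x ^ 2) v) : ν a ≤ 1 := by
  have hv : ν v = 1 / 2 := by
    refine (sq_eq_sq₀ (padicNorm.nonneg v) (by norm_num)).1 ?_
    rw [← padicNorm_pow, h.equation, padicNorm.mul, padicNorm.mul, padicNorm_pow, hx,
      padicNorm_two_sq_add_sq hx hm, padicNorm_two_sq_add_sq hx hn]
    norm_num
  have hle : ν ((x ^ 2) ^ 2 - (m * n) ^ 2) ≤ 1 / 8 :=
    padicNorm_two_sq_sub_sq_le (by simp [padicNorm_pow, hx]) (by simp [padicNorm.mul, hm, hn])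
  rw [mul_pow, h.double, padicNorm.mul, padicNorm.mul, padicNorm_two_two, hv] at hle
  linarith

lemma IsConcordant.exists_pos_isHalf_one_le_padicNorm_two (hm : ν m = 1) (hn : ν n = 1)
    (h : IsConcordant m n a) : ∃ u v : ℚ, 0 < u ∧ 1 ≤ ν u ∧ IsHalf m n a u v := by
  have hm0 := ne_zero_of_padicNorm_eq_one hm
  have hn0 := ne_zero_of_padicNorm_eq_one hn
  obtain ⟨u, v, hu, huv⟩ := h.exists_pos_isHalf hm0 hn0
  rcases le_or_gt 1 (ν u) with hνu | hνu
  · exact ⟨u, v, hu, hνu, huv⟩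
  · have hνu0 : 0 < ν u := (padicNorm.nonneg u).lt_of_ne' (padicNorm.nonzero hu.ne')
    refine ⟨_, _, by positivity, ?_, huv.translate hu.ne'⟩
    simpa [padicNorm.div, padicNorm.mul, padicNorm_pow, hm, hn] using
      (one_le_inv₀ hνu0).2 hνu.le

lemma padicNorm_two_nine : ν 9 = 1 := by
  exact_mod_cast (padicNorm.nat_eq_one_iff (p := 2) 9).2 (by norm_num)

end TwoAdic

section Descent

local notation "ν" => padicNorm 2

variable {a u v x : ℚ}

lemma IsHalf.isSquare (hu : 0 < u) (h : IsHalf 1 9 a u v) : IsSquare u := by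
  obtain ⟨d, hd, hdvd, z, rfl⟩ := exists_squarefree_dvd_eq_mul_sq (a := 82) (b := 81) (x := u)
    (y := v) (by push_cast; linear_combination h.equation)
  have hd0 : 0 < d := by exact_mod_cast pos_of_mul_pos_left hu (sq_nonneg z)
  have hd3 : d ∣ 3 := (hd.dvd_pow_iff_dvd four_ne_zero).1 (by norm_num; exact hdvd)
  have hle := Int.le_of_dvd three_pos hd3
  interval_cases d
  · exact ⟨z, by push_cast; ring⟩
  · norm_num at hd3
  · have hz : z ≠ 0 := by
      rintro rfl
      simp at hu
    refine absurd ⟨v / (3 * z), ?_⟩ (not_isSquare_three_mul_pow_four_add z)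
    have heq := h.equation
    push_cast at heq
    field_simp
    linear_combination -heq

lemma not_two_dvd_of_sq_add_one_eq {d : ℤ} {z : ℚ} (hx : 1 < ν x) (hd : Squarefree d)
    (h : x ^ 2 + 1 = d * z ^ 2) : ¬ 2 ∣ d := by
  rintro ⟨k, rfl⟩
  have hνk : ν k = 1 := (padicNorm.int_eq_one_iff k).2 fun hk ↦ by
    have := hd 2 (mul_dvd_mul_left 2 hk)
    norm_num [Int.isUnit_iff] at this
  have hz : z ≠ 0 := by
    rintro rfl
    nlinarith [sq_nonneg x]
  refine padicNorm_two_sq_ne_half_mul_sq hz x ?_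
  rw [← padicNorm_pow, ← padicNorm_add_eq_left (y := 1), h]
  · push_cast
    rw [padicNorm.mul, padicNorm.mul, hνk, padicNorm_two_two, padicNorm_pow, mul_one]
  · simpa [padicNorm_pow] using one_lt_pow₀ hx two_ne_zero

lemma isSquare_sq_add_one_of_isSquare_mul (hx : 1 < ν x)
    (h : IsSquare ((x ^ 2 + 1) * (x ^ 2 + 81))) :
    IsSquare (x ^ 2 + 1) := by
  obtain ⟨y, hy⟩ := h
  -- `(x ^ 2 + 1, x * y)` is a point of the curve `Y ^ 2 = X * (X - 1) * (X + 80)`.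
  obtain ⟨d, hd, hdvd, z, hz⟩ := exists_squarefree_dvd_eq_mul_sq (a := 79) (b := -80)
    (x := x ^ 2 + 1) (y := x * y) (by push_cast; linear_combination -x ^ 2 * hy)
  have hpos : 0 < d * z ^ 2 := by
    rw [← hz]
    positivity
  have hd0 : 0 < d := by exact_mod_cast pos_of_mul_pos_left hpos (sq_nonneg z)
  have hodd := not_two_dvd_of_sq_add_one_eq hx hd hz
  have hd10 : d ∣ 10 := (hd.dvd_pow_iff_dvd four_ne_zero).1 (hdvd.trans ⟨-125, by norm_num⟩)
  have hle := Int.le_of_dvd (by norm_num) hd10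
  obtain rfl | rfl : d = 1 ∨ d = 5 := by interval_cases d <;> omega
  · exact ⟨z, by rw [hz]; push_cast; ring⟩
  · have hz0 : z ≠ 0 := by
      rintro rfl
      simp at hpos
    push_cast at hz
    refine absurd ⟨⟨5 * z, ?_⟩, ⟨y / z, ?_⟩⟩ (not_isSquare_and_isSquare_five_mul_sq_add x)
    · linear_combination 5 * hz
    · field_simp
      linear_combination hy - (x ^ 2 + 81) * hz

lemma IsHalf.isConcordant_of_one_lt_padicNorm_two (hx : 1 < ν x) (h : IsHalf 1 9 a (x ^ 2) v) :
    IsConcordant 1 9 x := by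
  have hx0 : x ≠ 0 := by
    rintro rfl
    simp at hx
    linarith
  have hmul : (x ^ 2 + 1) * (x ^ 2 + 81) = v / x * (v / x) := by
    field_simp
    linear_combination -h.equation
  have hsq := isSquare_sq_add_one_of_isSquare_mul hx ⟨v / x, hmul⟩
  have hsq' : IsSquare (x ^ 2 + 81) := by
    have := (IsSquare.mul_self (v / x)).div hsq
    rwa [← hmul, mul_div_cancel_left₀ _ (by positivity)] at this
  exact ⟨by rwa [one_pow], by norm_num; exact hsq'⟩

lemma IsConcordant.exists_two_mul_padicNorm_two_eq (ha : 1 < ν a) (h : IsConcordant 1 9 a) :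
    ∃ x : ℚ, IsConcordant 1 9 x ∧ 1 < ν x ∧ ν a = 2 * ν x := by
  obtain ⟨u, v, hu, hνu, huv⟩ :=
    h.exists_pos_isHalf_one_le_padicNorm_two padicNorm.one padicNorm_two_nine
  obtain ⟨x, hx⟩ := huv.isSquare hu
  obtain rfl : u = x ^ 2 := hx.trans (sq x).symm
  rw [padicNorm_pow, one_le_sq_iff₀ (padicNorm.nonneg x)] at hνu
  have hνx : 1 < ν x := hνu.lt_of_ne' fun hx1 ↦
    ha.not_ge (huv.padicNorm_two_le_one padicNorm.one padicNorm_two_nine hx1)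
  refine ⟨x, huv.isConcordant_of_one_lt_padicNorm_two hνx, hνx, ?_⟩
  have hsq := huv.padicNorm_two_sq_eq_four_mul padicNorm.one padicNorm_two_nine
    (by simpa [padicNorm_pow] using one_lt_pow₀ hνx two_ne_zero)
  rw [padicNorm_pow] at hsq
  refine (sq_eq_sq₀ (padicNorm.nonneg a) (by linarith)).1 ?_
  linear_combination hsq

lemma IsConcordant.padicNorm_two_le_one (h : IsConcordant 1 9 a) : ν a ≤ 1 := by
  have descent (k : ℕ) : ∀ a : ℚ, IsConcordant 1 9 a → 1 < ν a → ¬ ν a < 2 ^ k := by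
    induction k with
    | zero => exact fun a _ ha ↦ by simpa using ha.le
    | succ k ih =>
      intro a h ha hlt
      obtain ⟨x, hx, hνx, hax⟩ := h.exists_two_mul_padicNorm_two_eq ha
      exact ih x hx hνx (by rw [hax, pow_succ'] at hlt; linarith)
  by_contra! ha
  obtain ⟨k, hk⟩ := pow_unbounded_of_one_lt (ν a) one_lt_two
  exact descent k a h ha hk

lemma IsConcordant.eq_zero (h : IsConcordant 1 9 a) : a = 0 := by
  by_contra ha
  have hdiv := (h.mul_div ha).padicNorm_two_le_one
  rw [one_mul, padicNorm.div, padicNorm_two_nine] at hdiv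
  have hνa : 0 < ν a := (padicNorm.nonneg a).lt_of_ne' (padicNorm.nonzero ha)
  exact h.padicNorm_two_ne_one padicNorm.one
    (le_antisymm h.padicNorm_two_le_one ((div_le_one hνa).1 hdiv))

lemma eq_zero_or_sq_eq_of_sq_eq (h : v ^ 2 = u * (u + 1) * (u + 81)) : v = 0 ∨ u ^ 2 = 81 := by
  refine or_iff_not_imp_left.2 fun hv ↦ ?_
  have hhalf : IsHalf 1 9 ((u ^ 2 - 81) / (2 * v)) u v :=
    ⟨by linear_combination h, by field_simp; ring⟩
  have := (hhalf.isConcordant hv).eq_zero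
  rw [div_eq_zero_iff, or_iff_left (by simpa using hv)] at this
  linarith

end Descent

lemma nonempty_addEquiv_zmod_prod {A : Type*} [AddCommGroup A] {m n : ℕ} [NeZero m] [NeZero n]
    {t s : A} (ht : m • t = 0) (hs : n • s = 0)
    (hindep : ∀ i < m, ∀ j < n, i • t + j • s = 0 → i = 0 ∧ j = 0)
    (hgen : ∀ a : A, ∃ i j : ℕ, i • t + j • s = a) : Nonempty (A ≃+ ZMod m × ZMod n) := by
  let f : ZMod m × ZMod n →+ A := AddMonoidHom.coprod
    (ZMod.lift m ⟨zmultiplesHom A t, by simpa using ht⟩)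
    (ZMod.lift n ⟨zmultiplesHom A s, by simpa using hs⟩)
  have hf (i j : ℕ) : f (i, j) = i • t + j • s := by
    simp only [f, AddMonoidHom.coprod_apply, ← Int.cast_natCast (R := ZMod _), ZMod.lift_coe,
      zmultiplesHom_apply, natCast_zsmul]
  refine ⟨(AddEquiv.ofBijective f ⟨?_, fun a ↦ ?_⟩).symm⟩
  · refine (injective_iff_map_eq_zero f).2 fun ⟨i, j⟩ h ↦ ?_
    rw [← ZMod.natCast_zmod_val i, ← ZMod.natCast_zmod_val j, hf] at h
    obtain ⟨hi, hj⟩ := hindep _ i.val_lt _ j.val_lt h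
    rw [(ZMod.val_eq_zero i).1 hi, (ZMod.val_eq_zero j).1 hj, Prod.mk_zero_zero]
  · obtain ⟨i, j, h⟩ := hgen a
    exact ⟨(i, j), (hf i j).trans h⟩

section MordellWeil

open WeierstrassCurve WeierstrassCurve.Affine

variable {x y : ℚ}

lemma curve10_nonsingular_iff :
    curve10.Nonsingular x y ↔ y ^ 2 = (x - 1) * (x + 8) * (x - 8 / 9) := by
  have hΔ : curve10.Δ ≠ 0 := by
    norm_num [curve10, Δ, b₂, b₄, b₆, b₈]
  rw [← equation_iff_nonsingular_of_Δ_ne_zero hΔ, equation_iff, ← sub_eq_zero,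
    ← sub_eq_zero (a := y ^ 2)]
  simp only [curve10]
  ring_nf

/-- The affine point `(x, y)` of `curve10`, given by the factored equation of the curve. -/
def curve10Point (x y : ℚ) (h : y ^ 2 = (x - 1) * (x + 8) * (x - 8 / 9)) : curve10.Point :=
  .some x y (curve10_nonsingular_iff.2 h)

lemma curve10Point_ne_zero (h : y ^ 2 = (x - 1) * (x + 8) * (x - 8 / 9)) :
    curve10Point x y h ≠ 0 :=
  Point.some_ne_zero _

/-- A rational point of order `2` on `curve10`, not divisible by `2`. -/
def curve10T : curve10.Point := curve10Point (-8) 0 (by norm_num)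

/-- A rational point of order `4` on `curve10`. -/
def curve10S : curve10.Point := curve10Point 2 (10 / 3) (by norm_num)

lemma curve10T_ne_zero : curve10T ≠ 0 := curve10Point_ne_zero _

lemma curve10S_ne_zero : curve10S ≠ 0 := curve10Point_ne_zero _

lemma two_nsmul_curve10T : 2 • curve10T = 0 := by
  rw [two_nsmul]
  exact Point.add_self_of_Y_eq (by norm_num [negY, curve10])

lemma two_nsmul_curve10S : 2 • curve10S = curve10Point 1 0 (by norm_num) := by
  rw [two_nsmul]
  refine (Point.add_self_of_Y_ne ?_).trans ?_
  all_goals norm_num [curve10Point, Affine.slope, addX, addY, negAddY, negY, curve10]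

lemma three_nsmul_curve10S : 3 • curve10S = curve10Point 2 (-10 / 3) (by norm_num) := by
  rw [succ_nsmul, two_nsmul_curve10S]
  refine (Point.add_of_X_ne ?_).trans ?_
  all_goals norm_num [curve10Point, Affine.slope, addX, addY, negAddY, negY, curve10]

lemma four_nsmul_curve10S : 4 • curve10S = 0 := by
  rw [show 4 = 2 * 2 from rfl, mul_nsmul, two_nsmul_curve10S, two_nsmul]
  exact Point.add_self_of_Y_eq (by norm_num [negY, curve10])

lemma curve10T_add_curve10S : curve10T + curve10S = curve10Point 0 (-8 / 3) (by norm_num) := by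
  refine (Point.add_of_X_ne ?_).trans ?_
  all_goals norm_num [curve10Point, Affine.slope, addX, addY, negAddY, negY, curve10]

lemma curve10T_add_two_nsmul_curve10S :
    curve10T + 2 • curve10S = curve10Point (8 / 9) 0 (by norm_num) := by
  rw [two_nsmul_curve10S]
  refine (Point.add_of_X_ne ?_).trans ?_
  all_goals norm_num [curve10Point, Affine.slope, addX, addY, negAddY, negY, curve10]

lemma curve10T_add_three_nsmul_curve10S :
    curve10T + 3 • curve10S = curve10Point 0 (8 / 3) (by norm_num) := by
  rw [three_nsmul_curve10S]
  refine (Point.add_of_X_ne ?_).trans ?_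
  all_goals norm_num [curve10Point, Affine.slope, addX, addY, negAddY, negY, curve10]

lemma eq_zero_of_nsmul_curve10T_add_nsmul_curve10S_eq_zero : ∀ i < 2, ∀ j < 4,
    i • curve10T + j • curve10S = 0 → i = 0 ∧ j = 0 := by
  intro i hi j hj h
  interval_cases i
  · rw [zero_nsmul, zero_add] at h
    interval_cases j <;>
      simp [two_nsmul_curve10S, three_nsmul_curve10S, curve10S_ne_zero, curve10Point_ne_zero] at h ⊢
  · rw [one_nsmul] at h
    interval_cases j <;>
      simp [↓curve10T_add_two_nsmul_curve10S, ↓curve10T_add_three_nsmul_curve10S,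
        curve10T_add_curve10S, curve10T_ne_zero, curve10Point_ne_zero] at h

lemma curve10_coordinates (h : y ^ 2 = (x - 1) * (x + 8) * (x - 8 / 9)) :
    (y = 0 ∧ (x = 1 ∨ x = -8 ∨ x = 8 / 9)) ∨ (x = 2 ∧ (y = 10 / 3 ∨ y = -10 / 3)) ∨
      (x = 0 ∧ (y = 8 / 3 ∨ y = -8 / 3)) := by
  rcases eq_zero_or_sq_eq_of_sq_eq (u := 9 * x - 9) (v := 27 * y) (by linear_combination 729 * h)
    with hv | hu
  · obtain rfl : y = 0 := by linarith
    exact .inl ⟨rfl, by grind⟩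
  · obtain rfl | rfl : x = 2 ∨ x = 0 := by grind
    · exact .inr (.inl ⟨rfl, by grind⟩)
    · exact .inr (.inr ⟨rfl, by grind⟩)

lemma exists_nsmul_curve10T_add_nsmul_curve10S_eq (P : curve10.Point) :
    ∃ i j : ℕ, i • curve10T + j • curve10S = P := by
  rcases P with _ | ⟨x, y, h⟩
  · exact ⟨0, 0, by rw [zero_nsmul, zero_nsmul, zero_add]; rfl⟩
  obtain ⟨rfl, rfl | rfl | rfl⟩ | ⟨rfl, rfl | rfl⟩ | ⟨rfl, rfl | rfl⟩ :=
    curve10_coordinates (curve10_nonsingular_iff.1 h)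
  · exact ⟨0, 2, by rw [zero_nsmul, zero_add, two_nsmul_curve10S]; rfl⟩
  · exact ⟨1, 0, by rw [one_nsmul, zero_nsmul, add_zero]; rfl⟩
  · exact ⟨1, 2, by rw [one_nsmul, curve10T_add_two_nsmul_curve10S]; rfl⟩
  · exact ⟨0, 1, by rw [zero_nsmul, one_nsmul, zero_add]; rfl⟩
  · exact ⟨0, 3, by rw [zero_nsmul, zero_add, three_nsmul_curve10S]; rfl⟩
  · exact ⟨1, 3, by rw [one_nsmul, curve10T_add_three_nsmul_curve10S]; rfl⟩
  · exact ⟨1, 1, by rw [one_nsmul, one_nsmul, curve10T_add_curve10S]; rfl⟩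

end MordellWeil

/-- The elliptic curve induced by the triple `{3, −1/3, 8/3}` has torsion subgroup
`ℤ/2ℤ × ℤ/4ℤ` and rank 0; equivalently, its full Mordell–Weil group over `ℚ`
is isomorphic to `ℤ/2ℤ × ℤ/4ℤ`. -/
theorem curve10_group :
    Nonempty (curve10.Point ≃+ (ZMod 2 × ZMod 4)) :=
  nonempty_addEquiv_zmod_prod two_nsmul_curve10T four_nsmul_curve10S
    eq_zero_of_nsmul_curve10T_add_nsmul_curve10S_eq_zero
    exists_nsmul_curve10T_add_nsmul_curve10S_eq
end

section
/- The set {4/3, −3/4, 7/12} is a rational Diophantine triple, and the elliptic curve y² = (4x/3+1)(−3x/4+1)(7x/12+1) has torsion subgroup over ℚ isomorphic to ℤ/2ℤ × ℤ/8ℤ. -/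
/-- The Weierstrass model `y² = (x+ab)(x+ac)(x+bc)` of the elliptic curve
`y² = (4x/3+1)(−3x/4+1)(7x/12+1)` induced by the rational Diophantine triple
`{4/3, −3/4, 7/12}` (via `(x, y) ↦ (abc·x, abc·y)`). -/
def curve15 : WeierstrassCurve.Affine ℚ :=
  { a₁ := 0, a₂ := (4/3) * (-3/4) + (4/3) * (7/12) + (-3/4) * (7/12), a₃ := 0,
    a₄ := (4/3) * (-3/4) * (7/12) * ((4/3) + (-3/4) + (7/12)),
    a₆ := ((4/3) * (-3/4) * (7/12)) ^ 2 }

/-!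
In the coordinate `z = x - 1` the curve is `y² = z(z + k²)(z + k⁻²)` with `k = 4/3`, and the double
of `(z, y)` has `z`-coordinate `((z² - 1) / (2y))²`. Since `v₂ k = 2`, the three coordinates
`z, z + k², z + k⁻²` of a point of `2E(ℚ)`, being squares, force `v₂ z ≤ -4`, `v₂ z = 0` or
`4 ≤ v₂ z`, and at most two further doublings lead to the point at infinity or to `v₂ z < -4`.
There each doubling strictly lowers `v₂ z`, so the order is infinite: every torsion point is killed
by `8`. With `A = (7/6, 35/72)` and `B = (7/16, 0)`, the `2`-torsion is generated by `B` and `4A`,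
while none of `A`, `B`, `A + B` is a double because their `z`-coordinates are not squares; hence the
torsion subgroup is `⟨B⟩ ⊕ ⟨A⟩`.
-/

local notation "v₂" => padicValRat 2

section Subgroups

variable {G : Type*} [AddCommGroup G] {S T : AddSubgroup G}

lemma mem_of_two_pow_nsmul_mem (htwo : ∀ R : G, 2 • R = 0 → R ∈ S)
    (hpure : ∀ Q : G, 2 • Q ∈ S → ∃ R ∈ S, 2 • R = 2 • Q) (k : ℕ) {P : G}
    (hP : 2 ^ k • P ∈ S) : P ∈ S := by
  induction k with
  | zero => simpa using hP
  | succ k ih =>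
    apply ih
    rw [pow_succ', mul_nsmul'] at hP
    obtain ⟨R, hR, hRP⟩ := hpure _ hP
    have hdiff : 2 ^ k • P - R ∈ S := htwo _ (by rw [nsmul_sub, hRP, sub_self])
    simpa using S.add_mem hdiff hR

lemma nonempty_sup_addEquiv_prod (h : Disjoint S T) :
    Nonempty ((S ⊔ T : AddSubgroup G) ≃+ S × T) := by
  let f : S × T →+ G := S.subtype.coprod T.subtype
  have hinj : Function.Injective f := by
    rw [injective_iff_map_eq_zero]
    rintro ⟨s, t⟩ hst
    have hst : (s : G) + t = 0 := hst
    have hs : (s : G) ∈ T := eq_neg_of_add_eq_zero_left hst ▸ T.neg_mem t.2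
    have hs0 : (s : G) = 0 := AddSubgroup.disjoint_def.1 h s.2 hs
    have ht0 : (t : G) = 0 := by simpa only [hs0, zero_add] using hst
    exact Prod.ext (Subtype.ext hs0) (Subtype.ext ht0)
  have hrange : f.range = S ⊔ T := by
    ext P
    simp [f, AddSubgroup.mem_sup]
  exact ⟨((AddMonoidHom.ofInjective hinj).trans (AddEquiv.addSubgroupCongr hrange)).symm⟩

end Subgroups

section TwoGenerators

open AddSubgroup

variable {G : Type*} [AddCommGroup G] {A B : G}

lemma nonempty_zmultiples_addEquiv_zmod {n : ℕ} (hA : addOrderOf A = n) :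
    Nonempty (zmultiples A ≃+ ZMod n) := by
  rw [← hA, ← Nat.card_zmultiples]
  exact ⟨(zmodAddCyclicAddEquiv inferInstance).symm⟩

lemma even_and_even_of_two_nsmul_eq (hA : ∀ Q, 2 • Q ≠ A) (hB : ∀ Q, 2 • Q ≠ B)
    (hBA : ∀ Q, 2 • Q ≠ B + A) {i j : ℤ} {Q : G} (h : 2 • Q = i • B + j • A) :
    Even i ∧ Even j := by
  rcases Int.even_or_odd' i with ⟨m, rfl | rfl⟩ <;> rcases Int.even_or_odd' j with ⟨n, rfl | rfl⟩
  · simp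
  · exact absurd (by linear_combination (norm := module) (1 : ℤ) • h) (hA (Q - m • B - n • A))
  · exact absurd (by linear_combination (norm := module) (1 : ℤ) • h) (hB (Q - m • B - n • A))
  · exact absurd (by linear_combination (norm := module) (1 : ℤ) • h) (hBA (Q - m • B - n • A))

lemma zsmul_eq_zero_of_even (hB : 2 • B = 0) {i : ℤ} (hi : Even i) : i • B = 0 := by
  obtain ⟨m, rfl⟩ := hi
  linear_combination (norm := module) m • hB

lemma disjoint_zmultiples_of_two_nsmul_ne (hA : ∀ Q, 2 • Q ≠ A) (hB : ∀ Q, 2 • Q ≠ B)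
    (hBA : ∀ Q, 2 • Q ≠ B + A) (hB2 : 2 • B = 0) : Disjoint (zmultiples B) (zmultiples A) := by
  simp only [disjoint_def, mem_zmultiples_iff]
  rintro _ ⟨i, rfl⟩ ⟨j, hj⟩
  have hsum : 2 • (0 : G) = i • B + (-j) • A := by linear_combination (norm := module) (1 : ℤ) • hj
  exact zsmul_eq_zero_of_even hB2 (even_and_even_of_two_nsmul_eq hA hB hBA hsum).1

lemma torsion_eq_zmultiples_sup_zmultiples (hA : ∀ Q, 2 • Q ≠ A) (hB : ∀ Q, 2 • Q ≠ B)
    (hBA : ∀ Q, 2 • Q ≠ B + A) (hB2 : 2 • B = 0) (hAfin : IsOfFinAddOrder A)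
    (htwo : ∀ R : G, 2 • R = 0 → R ∈ zmultiples B ⊔ zmultiples A)
    (htors : ∀ P : G, IsOfFinAddOrder P → ∃ k, 2 ^ k • P = 0) :
    AddCommGroup.torsion G = zmultiples B ⊔ zmultiples A := by
  apply le_antisymm
  · intro P hP
    obtain ⟨k, hk⟩ := htors P hP
    refine mem_of_two_pow_nsmul_mem htwo (fun Q hQ ↦ ?_) k (hk ▸ zero_mem _)
    simp only [mem_sup, mem_zmultiples_iff, exists_exists_eq_and] at hQ
    obtain ⟨i, j, hij⟩ := hQ
    obtain ⟨hi, n, rfl⟩ := even_and_even_of_two_nsmul_eq hA hB hBA hij.symm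
    refine ⟨n • A, mem_sup_right (zsmul_mem_zmultiples A n), ?_⟩
    rw [← hij, zsmul_eq_zero_of_even hB2 hi]
    module
  · have hBfin : IsOfFinAddOrder B := isOfFinAddOrder_iff_nsmul_eq_zero.2 ⟨2, two_pos, hB2⟩
    exact sup_le (zmultiples_le.2 hBfin) (zmultiples_le.2 hAfin)

end TwoGenerators

section Descent

lemma not_isOfFinAddOrder_of_two_nsmul_lt {M α : Type*} [AddLeftCancelMonoid M] [Preorder α]
    {f : M → α} {c : α} (hf : ∀ P, f P < c → f (2 • P) < f P) {P : M} (hP : f P < c) :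
    ¬IsOfFinAddOrder P := by
  have hlt (k : ℕ) : f (2 ^ k • P) < c := by
    induction k with
    | zero => simpa only [pow_zero, one_nsmul] using hP
    | succ k ih => exact (pow_succ' 2 k ▸ mul_nsmul' P 2 (2 ^ k) ▸ hf _ ih).trans ih
  have hanti : StrictAnti fun k : ℕ ↦ f (2 ^ k • P) := strictAnti_nat_of_succ_lt fun k ↦ by
    rw [pow_succ', mul_nsmul']
    exact hf _ (hlt k)
  have hinj : Function.Injective fun k : ℕ ↦ 2 ^ k • P := hanti.injective.of_comp (f := f)
  intro hfin
  exact Set.infinite_range_of_injective hinj <|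
    (finite_multiples.2 hfin).subset (Set.range_subset_iff.2 fun k ↦ ⟨2 ^ k, rfl⟩)

end Descent

section TwoAdic

lemma ne_zero_of_padicValRat_ne_zero {p : ℕ} {q : ℚ} (hq : padicValRat p q ≠ 0) : q ≠ 0 := by
  rintro rfl
  exact hq padicValRat.zero

lemma one_le_padicValRat_two_add_one {z : ℚ} (hz0 : z ≠ 0) (hz1 : z + 1 ≠ 0) (hz : v₂ z = 0) :
    1 ≤ v₂ (z + 1) := by
  have hnum0 : z.num ≠ 0 := Rat.num_ne_zero.2 hz0
  have hval : padicValInt 2 z.num = padicValNat 2 z.den := by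
    rw [padicValRat_def] at hz
    omega
  have hden : ¬2 ∣ z.den := fun hdvd ↦ by
    have hone : 1 ≤ padicValInt 2 z.num := hval ▸ one_le_padicValNat_of_dvd z.den_nz hdvd
    exact Nat.not_coprime_of_dvd_of_dvd one_lt_two (dvd_of_one_le_padicValNat hone) hdvd z.reduced
  have hnum : ¬(2 : ℤ) ∣ z.num := by
    rw [padicValNat.eq_zero_of_not_dvd hden, padicValInt.eq_zero_iff] at hval
    exact (hval.resolve_left one_lt_two.ne').resolve_left hnum0
  have hadd : z + 1 = ((z.num + z.den : ℤ) : ℚ) / (z.den : ℕ) := by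
    rw [eq_div_iff (Nat.cast_ne_zero.2 z.den_nz), add_mul, Rat.mul_den_eq_num]
    push_cast
    ring
  have hnumden0 : z.num + z.den ≠ 0 := fun h ↦ hz1 (by rw [hadd, h, Int.cast_zero, zero_div])
  have heven : (2 : ℤ) ^ 1 ∣ z.num + z.den := by omega
  have hone := ((padicValInt_dvd_iff 1 _).1 heven).resolve_left hnumden0
  rw [hadd, padicValRat.div (Int.cast_ne_zero.2 hnumden0) (Nat.cast_ne_zero.2 z.den_nz),
    padicValRat.of_int, padicValRat.of_nat, padicValNat.eq_zero_of_not_dvd hden, Nat.cast_zero,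
    sub_zero]
  exact_mod_cast hone

lemma padicValRat_two_lt_add {x y : ℚ} (hx : x ≠ 0) (hy : y ≠ 0) (hxy : x + y ≠ 0)
    (h : v₂ x = v₂ y) : v₂ x < v₂ (x + y) := by
  have hz0 : x / y ≠ 0 := div_ne_zero hx hy
  have hsum : x + y = y * (x / y + 1) := by field_simp
  have hz1 : x / y + 1 ≠ 0 := right_ne_zero_of_mul (hsum ▸ hxy)
  have hval : v₂ (x / y) = 0 := by rw [padicValRat.div hx hy, h, sub_self]
  have := one_le_padicValRat_two_add_one hz0 hz1 hval
  rw [hsum, padicValRat.mul hy hz1]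
  omega

lemma padicValRat_two_two_mul {x : ℚ} (hx : x ≠ 0) : v₂ (2 * x) = v₂ x + 1 := by
  rw [padicValRat.mul two_ne_zero hx, add_comm]
  exact congrArg _ (padicValRat.self one_lt_two)

lemma two_mul_padicValRat_two_add_three_le_sq_sub_sq {x y : ℚ} (hx : x ≠ 0) (hy : y ≠ 0)
    (hxy : x ^ 2 - y ^ 2 ≠ 0) (h : v₂ x = v₂ y) : 2 * v₂ x + 3 ≤ v₂ (x ^ 2 - y ^ 2) := by
  rw [sq_sub_sq] at hxy ⊢
  obtain ⟨hadd0, hsub0⟩ := mul_ne_zero_iff.1 hxy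
  have hadd : v₂ x < v₂ (x + y) := padicValRat_two_lt_add hx hy hadd0 h
  have hsub : v₂ x < v₂ (x - y) := by
    rw [sub_eq_add_neg] at hsub0 ⊢
    exact padicValRat_two_lt_add hx (neg_ne_zero.2 hy) hsub0 (by rw [h, padicValRat.neg])
  have hdouble : v₂ (2 * y) = v₂ y + 1 := padicValRat_two_two_mul hy
  have hne : v₂ (x - y) = v₂ (2 * y) → v₂ (x - y) < v₂ (x + y) := by
    rw [show x + y = x - y + 2 * y by ring] at hadd0 ⊢
    exact padicValRat_two_lt_add hsub0 (mul_ne_zero two_ne_zero hy) hadd0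
  rw [padicValRat.mul hadd0 hsub0]
  omega

lemma padicValRat_two_four_thirds : v₂ (4 / 3) = 2 := by
  have hodd : v₂ (3 : ℕ) = 0 := by
    rw [padicValRat.of_nat, padicValNat.eq_zero_of_not_dvd (by decide), Nat.cast_zero]
  rw [show (4 / 3 : ℚ) = 2 * (2 * ((3 : ℕ) : ℚ)⁻¹) by norm_num,
    padicValRat_two_two_mul (by norm_num), padicValRat_two_two_mul (by norm_num), padicValRat.inv,
    hodd]
  norm_num

lemma padicValRat_two_add_trichotomy {x y : ℚ} (hx : x ≠ 0) (hy : y ≠ 0) (hxy : x + y ≠ 0) :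
    v₂ x < v₂ y ∧ v₂ (x + y) = v₂ x ∨ v₂ y < v₂ x ∧ v₂ (x + y) = v₂ y ∨
      v₂ x = v₂ y ∧ v₂ x < v₂ (x + y) := by
  rcases lt_trichotomy (v₂ x) (v₂ y) with h | h | h
  · exact .inl ⟨h, padicValRat.add_eq_of_lt hxy hx hy h⟩
  · exact .inr (.inr ⟨h, padicValRat_two_lt_add hx hy hxy h⟩)
  · exact .inr (.inl ⟨h, by
      rw [add_comm] at hxy ⊢
      exact padicValRat.add_eq_of_lt hxy hy hx h⟩)

lemma padicValRat_two_add_sq_trichotomy {x y : ℚ} (hx : x ≠ 0) (hy : y ≠ 0)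
    (hxy : x + y ^ 2 ≠ 0) :
    v₂ x < 2 * v₂ y ∧ v₂ (x + y ^ 2) = v₂ x ∨ 2 * v₂ y < v₂ x ∧ v₂ (x + y ^ 2) = 2 * v₂ y ∨
      v₂ x = 2 * v₂ y ∧ v₂ x < v₂ (x + y ^ 2) := by
  simpa only [padicValRat.pow, Nat.cast_ofNat] using
    padicValRat_two_add_trichotomy hx (pow_ne_zero 2 hy) hxy

lemma padicValRat_two_add_two_le_of_sq_add_sq_eq_sq {a b c : ℚ} (ha : a ≠ 0) (hb : b ≠ 0)
    (habc : a ^ 2 + b ^ 2 = c ^ 2) (hab : v₂ a < v₂ b) : v₂ a + 2 ≤ v₂ b := by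
  have hsq (x : ℚ) : v₂ (x ^ 2) = 2 * v₂ x := by rw [padicValRat.pow, Nat.cast_ofNat]
  have hc2 : c ^ 2 ≠ 0 := by rw [← habc]; positivity
  have hac : v₂ c = v₂ a := by
    have := padicValRat_two_add_sq_trichotomy (pow_ne_zero 2 ha) hb (habc ▸ hc2)
    rw [habc, hsq, hsq] at this
    omega
  have hsub : c ^ 2 - a ^ 2 = b ^ 2 := by rw [← habc, add_sub_cancel_left]
  have hle := two_mul_padicValRat_two_add_three_le_sq_sub_sq (pow_ne_zero_iff two_ne_zero |>.1 hc2)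
    ha (hsub ▸ pow_ne_zero 2 hb) hac
  rw [hsub, hsq] at hle
  omega

end TwoAdic

section Duplication

variable {k y z : ℚ}

lemma factors_ne_zero_of_sq_eq (hyz : y ^ 2 = z * (z + k ^ 2) * (z + k⁻¹ ^ 2)) (hy : y ≠ 0) :
    z ≠ 0 ∧ z + k ^ 2 ≠ 0 ∧ z + k⁻¹ ^ 2 ≠ 0 := by
  have hprod : z * (z + k ^ 2) * (z + k⁻¹ ^ 2) ≠ 0 := hyz ▸ pow_ne_zero 2 hy
  simpa only [mul_ne_zero_iff, and_assoc] using hprod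

lemma cubic_ne_zero_of_padicValRat_two_lt (hk : v₂ k = 2) (hz : v₂ z < -4) :
    z * (z + k ^ 2) * (z + k⁻¹ ^ 2) ≠ 0 := by
  have hne {q : ℚ} (hq : -2 ≤ v₂ q) : z + q ^ 2 ≠ 0 := fun h ↦ by
    rw [eq_neg_of_add_eq_zero_left h, padicValRat.neg, padicValRat.pow, Nat.cast_ofNat] at hz
    omega
  exact mul_ne_zero (mul_ne_zero (ne_zero_of_padicValRat_ne_zero (p := 2) (by omega))
    (hne (by omega))) (hne (by rw [padicValRat.inv]; omega))

-- On `y² = z(z + k²)(z + k⁻²)` the double of `(z, y)` has first coordinate `((z² - 1) / (2y))²`.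
lemma padicValRat_two_duplication (hyz : y ^ 2 = z * (z + k ^ 2) * (z + k⁻¹ ^ 2)) (hy : y ≠ 0)
    (hz : z ^ 2 - 1 ≠ 0) :
    v₂ (((z ^ 2 - 1) / (2 * y)) ^ 2) =
      2 * v₂ (z ^ 2 - 1) - 2 - (v₂ z + v₂ (z + k ^ 2) + v₂ (z + k⁻¹ ^ 2)) := by
  obtain ⟨hz0, hz1, hz2⟩ := factors_ne_zero_of_sq_eq hyz hy
  have hval : 2 * v₂ y = v₂ z + v₂ (z + k ^ 2) + v₂ (z + k⁻¹ ^ 2) := by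
    rw [← padicValRat.mul hz0 hz1, ← padicValRat.mul (mul_ne_zero hz0 hz1) hz2, ← hyz,
      padicValRat.pow, Nat.cast_ofNat]
  rw [padicValRat.pow, padicValRat.div hz (mul_ne_zero two_ne_zero hy),
    padicValRat_two_two_mul hy, Nat.cast_ofNat, ← hval]
  ring

lemma padicValRat_two_sq_sub_one (hz : v₂ z ≠ 0) :
    z ^ 2 - 1 ≠ 0 ∧ v₂ (z ^ 2 - 1) = min (2 * v₂ z) 0 := by
  have hz0 : z ≠ 0 := ne_zero_of_padicValRat_ne_zero hz
  have hsq : v₂ (z ^ 2) = 2 * v₂ z := by rw [padicValRat.pow, Nat.cast_ofNat]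
  have hsub : z ^ 2 - 1 ≠ 0 := fun h ↦ by
    rw [sub_eq_zero.1 h, padicValRat.one] at hsq
    omega
  refine ⟨hsub, ?_⟩
  have hone : v₂ (-1) = 0 := by rw [padicValRat.neg, padicValRat.one]
  rw [sub_eq_add_neg] at hsub ⊢
  rw [padicValRat.add_eq_min hsub (pow_ne_zero 2 hz0) (neg_ne_zero.2 one_ne_zero) (by omega), hsq,
    hone]

lemma padicValRat_two_duplication_lt_min (hyz : y ^ 2 = z * (z + k ^ 2) * (z + k⁻¹ ^ 2))
    (hy : y ≠ 0) (hk : v₂ k = 2) (hz : v₂ z ≤ -4 ∨ 4 ≤ v₂ z) :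
    v₂ (((z ^ 2 - 1) / (2 * y)) ^ 2) < min (-4) (v₂ z) := by
  have hk0 : k ≠ 0 := ne_zero_of_padicValRat_ne_zero (p := 2) (by omega)
  obtain ⟨hz0, hz1, hz2⟩ := factors_ne_zero_of_sq_eq hyz hy
  obtain ⟨hsub0, hsub⟩ := padicValRat_two_sq_sub_one (z := z) (by omega)
  have hval1 := padicValRat_two_add_sq_trichotomy hz0 hk0 hz1
  have hval2 := padicValRat_two_add_sq_trichotomy hz0 (inv_ne_zero hk0) hz2
  rw [padicValRat.inv] at hval2
  rw [padicValRat_two_duplication hyz hy hsub0]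
  omega

lemma four_le_padicValRat_two_duplication (hyz : y ^ 2 = z * (z + k ^ 2) * (z + k⁻¹ ^ 2))
    (hy : y ≠ 0) (hk : v₂ k = 2) (hz : v₂ z = 0) (hsub : z ^ 2 - 1 ≠ 0) :
    4 ≤ v₂ (((z ^ 2 - 1) / (2 * y)) ^ 2) := by
  have hk0 : k ≠ 0 := ne_zero_of_padicValRat_ne_zero (p := 2) (by omega)
  obtain ⟨hz0, hz1, hz2⟩ := factors_ne_zero_of_sq_eq hyz hy
  have hval := two_mul_padicValRat_two_add_three_le_sq_sub_sq hz0 one_ne_zero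
    (by rwa [one_pow]) (hz.trans padicValRat.one.symm)
  rw [one_pow] at hval
  have hval1 := padicValRat_two_add_sq_trichotomy hz0 hk0 hz1
  have hval2 := padicValRat_two_add_sq_trichotomy hz0 (inv_ne_zero hk0) hz2
  rw [padicValRat.inv] at hval2
  rw [padicValRat_two_duplication hyz hy hsub]
  omega

lemma padicValRat_two_of_isSquare (hk : v₂ k = 2) (hz : IsSquare z) (hz1 : IsSquare (z + k ^ 2))
    (hz2 : IsSquare (z + k⁻¹ ^ 2)) : v₂ z ≤ -4 ∨ v₂ z = 0 ∨ 4 ≤ v₂ z := by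
  obtain ⟨a, rfl⟩ := (isSquare_iff_exists_sq z).1 hz
  obtain ⟨b, hb⟩ := (isSquare_iff_exists_sq _).1 hz1
  obtain ⟨c, hc⟩ := (isSquare_iff_exists_sq _).1 hz2
  rw [padicValRat.pow, Nat.cast_ofNat]
  by_cases ha : a = 0
  · simp [ha]
  have hk0 : k ≠ 0 := ne_zero_of_padicValRat_ne_zero (p := 2) (by omega)
  have hak := padicValRat_two_add_two_le_of_sq_add_sq_eq_sq ha hk0 hb
  have hka := padicValRat_two_add_two_le_of_sq_add_sq_eq_sq (inv_ne_zero hk0) ha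
    ((add_comm _ _).trans hc)
  rw [padicValRat.inv] at hka
  omega

end Duplication

section CharNeTwoNF

open WeierstrassCurve.Affine

variable {F : Type*} [Field F] {W : WeierstrassCurve.Affine F} [W.IsCharNeTwoNF]

lemma equation_iff_of_isCharNeTwoNF {x y : F} :
    W.Equation x y ↔ y ^ 2 = x ^ 3 + W.a₂ * x ^ 2 + W.a₄ * x + W.a₆ := by
  simp only [equation_iff, WeierstrassCurve.a₁_of_isCharNeTwoNF,
    WeierstrassCurve.a₃_of_isCharNeTwoNF, zero_mul, add_zero]

lemma negY_of_isCharNeTwoNF (x y : F) : W.negY x y = -y := by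
  simp only [negY, WeierstrassCurve.a₁_of_isCharNeTwoNF, WeierstrassCurve.a₃_of_isCharNeTwoNF,
    zero_mul, sub_zero]

lemma eq_negY_iff_of_isCharNeTwoNF {x y : F} : y = W.negY x y ↔ 2 * y = 0 := by
  rw [negY_of_isCharNeTwoNF, eq_neg_iff_add_eq_zero, two_mul]

variable [DecidableEq F]

lemma addX_sub_eq_sq_of_isCharNeTwoNF {e x y : F} (he : W.Equation e 0) (h : W.Equation x y)
    (hy : 2 * y ≠ 0) :
    W.addX x x (W.slope x x y y) - e =
      (((x - e) ^ 2 - (3 * e ^ 2 + 2 * W.a₂ * e + W.a₄)) / (2 * y)) ^ 2 := by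
  rw [equation_iff_of_isCharNeTwoNF] at he h
  have hsq : (3 * x ^ 2 + 2 * W.a₂ * x + W.a₄) ^ 2 - (W.a₂ + 2 * x + e) * (2 * y) ^ 2 =
      ((x - e) ^ 2 - (3 * e ^ 2 + 2 * W.a₂ * e + W.a₄)) ^ 2 := by
    linear_combination (-4 * (W.a₂ + 2 * x + e)) * (h - he)
  rw [div_pow, ← hsq, sub_div, mul_div_cancel_right₀ _ (pow_ne_zero 2 hy),
    slope_of_Y_ne rfl (eq_negY_iff_of_isCharNeTwoNF.not.2 hy), negY_of_isCharNeTwoNF]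
  simp only [addX, WeierstrassCurve.a₁_of_isCharNeTwoNF, zero_mul, add_zero, sub_zero,
    sub_neg_eq_add, ← two_mul, div_pow]
  ring

lemma exists_two_nsmul_some_eq {x y : F} (h : W.Nonsingular x y) (hy : 2 * y ≠ 0) :
    ∃ (x' y' : F) (h' : W.Nonsingular x' y'), 2 • Point.some x y h = Point.some x' y' h' ∧
      ∀ e, W.Equation e 0 →
        x' - e = (((x - e) ^ 2 - (3 * e ^ 2 + 2 * W.a₂ * e + W.a₄)) / (2 * y)) ^ 2 :=
  ⟨_, _, _, (two_nsmul _).trans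
      (Point.add_self_of_Y_ne (eq_negY_iff_of_isCharNeTwoNF.not.2 hy)),
    fun _ he ↦ addX_sub_eq_sq_of_isCharNeTwoNF he h.1 hy⟩

lemma two_nsmul_some_eq_zero_iff {x y : F} (h : W.Nonsingular x y) :
    2 • Point.some x y h = 0 ↔ 2 * y = 0 := by
  refine ⟨fun h0 ↦ ?_, fun hy ↦ ?_⟩
  · by_contra hy
    obtain ⟨x', y', h', h2, -⟩ := exists_two_nsmul_some_eq h hy
    exact Point.some_ne_zero h' (h2.symm.trans h0)
  · rw [two_nsmul, Point.add_self_of_Y_eq (eq_negY_iff_of_isCharNeTwoNF.2 hy)]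

lemma isSquare_sub_of_two_nsmul_eq {e x y : F} (he : W.Equation e 0) {h : W.Nonsingular x y}
    {P : W.Point} (hP : 2 • P = Point.some x y h) : IsSquare (x - e) := by
  rcases P with _ | ⟨u, v, huv⟩
  · exact absurd ((nsmul_zero 2).symm.trans hP).symm (Point.some_ne_zero h)
  · have hv : 2 * v ≠ 0 := fun hv ↦
      Point.some_ne_zero h (hP.symm.trans ((two_nsmul_some_eq_zero_iff huv).2 hv))
    obtain ⟨x', y', h', h2, hx'⟩ := exists_two_nsmul_some_eq huv hv
    obtain ⟨rfl, -⟩ := Point.some.inj (hP.symm.trans h2)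
    rw [hx' e he]
    exact IsSquare.sq _

lemma exists_some_add_some_eq {x₁ y₁ x₂ y₂ : F} (h₁ : W.Nonsingular x₁ y₁)
    (h₂ : W.Nonsingular x₂ y₂) (hx : x₁ ≠ x₂) :
    ∃ (x y : F) (h : W.Nonsingular x y), Point.some x₁ y₁ h₁ + Point.some x₂ y₂ h₂ =
      Point.some x y h ∧ x = ((y₁ - y₂) / (x₁ - x₂)) ^ 2 - W.a₂ - x₁ - x₂ := by
  refine ⟨_, _, _, Point.add_of_X_ne hx, ?_⟩
  simp only [slope_of_X_ne hx, addX, WeierstrassCurve.a₁_of_isCharNeTwoNF, zero_mul, add_zero]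

end CharNeTwoNF

namespace curve15

open WeierstrassCurve.Affine

instance isCharNeTwoNF : curve15.IsCharNeTwoNF := ⟨rfl, rfl⟩

instance isElliptic : curve15.IsElliptic := by
  rw [WeierstrassCurve.isElliptic_iff, isUnit_iff_ne_zero]
  norm_num [curve15, WeierstrassCurve.Δ, WeierstrassCurve.b₂, WeierstrassCurve.b₄,
    WeierstrassCurve.b₆, WeierstrassCurve.b₈]

variable {x y : ℚ} {P : curve15.Point}

lemma equation_iff_sq_eq : curve15.Equation x y ↔
    y ^ 2 = (x - 1) * (x - 1 + (4 / 3) ^ 2) * (x - 1 + (4 / 3)⁻¹ ^ 2) := by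
  rw [equation_iff_of_isCharNeTwoNF]
  constructor <;> (intro h; simp only [curve15] at h ⊢; linear_combination h)

lemma nonsingular_of_sq_eq
    (h : y ^ 2 = (x - 1) * (x - 1 + (4 / 3) ^ 2) * (x - 1 + (4 / 3)⁻¹ ^ 2)) :
    curve15.Nonsingular x y :=
  equation_iff_nonsingular.1 (equation_iff_sq_eq.2 h)

lemma exists_two_nsmul_some_sub_one_eq (h : curve15.Nonsingular x y) (hy : y ≠ 0) :
    ∃ (x' y' : ℚ) (h' : curve15.Nonsingular x' y'),
      2 • Point.some x y h = Point.some x' y' h' ∧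
        x' - 1 = (((x - 1) ^ 2 - 1) / (2 * y)) ^ 2 := by
  obtain ⟨x', y', h', h2, hx'⟩ := exists_two_nsmul_some_eq h (mul_ne_zero two_ne_zero hy)
  refine ⟨x', y', h', h2, ?_⟩
  have hderiv : 3 * 1 ^ 2 + 2 * curve15.a₂ * 1 + curve15.a₄ = 1 := by norm_num [curve15]
  rw [hx' 1 (equation_iff_sq_eq.2 (by norm_num)), hderiv]

lemma two_nsmul_some_eq_zero (h : curve15.Nonsingular x 0) : 2 • Point.some x 0 h = 0 :=
  (two_nsmul_some_eq_zero_iff h).2 (mul_zero 2)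

/-- The `2`-adic valuation of `x - 1`; the point at infinity, like the points with `x = 1`, gets
the junk value `0`. -/
def valX : curve15.Point → ℤ
  | .zero => 0
  | .some x _ _ => padicValRat 2 (x - 1)

lemma valX_two_nsmul_lt_min (hP : valX P ≤ -4 ∨ 4 ≤ valX P) (h2P : 2 • P ≠ 0) :
    valX (2 • P) < min (-4) (valX P) := by
  rcases P with _ | ⟨x, y, h⟩
  · exact absurd (nsmul_zero 2) h2P
  · have hy : y ≠ 0 := by
      rintro rfl
      exact h2P (two_nsmul_some_eq_zero h)
    obtain ⟨x', y', h', h2, hx'⟩ := exists_two_nsmul_some_sub_one_eq h hy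
    rw [h2]
    simp only [valX] at hP ⊢
    rw [hx']
    exact padicValRat_two_duplication_lt_min (equation_iff_sq_eq.1 h.1) hy
      padicValRat_two_four_thirds hP

lemma four_le_valX_two_nsmul (hP : valX P = 0) (h4P : 2 • 2 • P ≠ 0) : 4 ≤ valX (2 • P) := by
  rcases P with _ | ⟨x, y, h⟩
  · exact absurd ((congrArg (2 • ·) (nsmul_zero 2)).trans (nsmul_zero 2)) h4P
  · have hy : y ≠ 0 := by
      rintro rfl
      exact h4P (by rw [two_nsmul_some_eq_zero h, nsmul_zero])
    obtain ⟨x', y', h', h2, hx'⟩ := exists_two_nsmul_some_sub_one_eq h hy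
    have hsub : (x - 1) ^ 2 - 1 ≠ 0 := fun hsub ↦ by
      obtain rfl : x' = 1 := by rw [← sub_eq_zero, hx', hsub]; norm_num
      obtain rfl : y' = 0 := by simpa using equation_iff_sq_eq.1 h'.1
      exact h4P (by rw [h2, two_nsmul_some_eq_zero h'])
    rw [h2]
    simp only [valX] at hP ⊢
    rw [hx']
    exact four_le_padicValRat_two_duplication (equation_iff_sq_eq.1 h.1) hy
      padicValRat_two_four_thirds hP hsub

lemma valX_two_nsmul_trichotomy (P : curve15.Point) :
    valX (2 • P) ≤ -4 ∨ valX (2 • P) = 0 ∨ 4 ≤ valX (2 • P) := by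
  generalize hQ : 2 • P = Q
  rcases Q with _ | ⟨x, y, h⟩
  · exact .inr (.inl rfl)
  · have hsq {e : ℚ} (he : curve15.Equation e 0) : IsSquare (x - e) :=
      isSquare_sub_of_two_nsmul_eq he hQ
    refine padicValRat_two_of_isSquare padicValRat_two_four_thirds
      (hsq (equation_iff_sq_eq.2 (by norm_num))) ?_ ?_
    · convert hsq (e := 1 - (4 / 3) ^ 2) (equation_iff_sq_eq.2 (by norm_num)) using 1; ring
    · convert hsq (e := 1 - (4 / 3)⁻¹ ^ 2) (equation_iff_sq_eq.2 (by norm_num)) using 1; ring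

lemma valX_two_nsmul_lt_of_lt (hP : valX P < -4) : valX (2 • P) < valX P := by
  have h2P : 2 • P ≠ 0 := by
    rcases P with _ | ⟨x, y, h⟩
    · simp [valX] at hP
    · rw [Ne, two_nsmul_some_eq_zero_iff, mul_eq_zero_iff_left two_ne_zero, ← sq_eq_zero_iff,
        equation_iff_sq_eq.1 h.1]
      exact cubic_ne_zero_of_padicValRat_two_lt padicValRat_two_four_thirds hP
  exact (lt_min_iff.1 (valX_two_nsmul_lt_min (.inl hP.le) h2P)).2

lemma neg_four_le_valX_of_isOfFinAddOrder (hP : IsOfFinAddOrder P) : -4 ≤ valX P :=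
  not_lt.1 fun hlt ↦
    not_isOfFinAddOrder_of_two_nsmul_lt (f := valX) (fun _ ↦ valX_two_nsmul_lt_of_lt) hlt hP

lemma two_pow_three_nsmul_eq_zero_of_isOfFinAddOrder (hP : IsOfFinAddOrder P) :
    2 ^ 3 • P = 0 := by
  rw [show 2 ^ 3 • P = 2 • 2 • 2 • P by simp only [← mul_nsmul']; rfl]
  by_contra h8
  have h4 : 2 • 2 • P ≠ 0 := fun h ↦ h8 (by rw [h, nsmul_zero])
  have hval4 := neg_four_le_valX_of_isOfFinAddOrder (P := 2 • 2 • P) hP.nsmul.nsmul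
  have hval8 := neg_four_le_valX_of_isOfFinAddOrder (P := 2 • 2 • 2 • P) hP.nsmul.nsmul.nsmul
  rcases valX_two_nsmul_trichotomy P with h | h | h
  · have := valX_two_nsmul_lt_min (.inl h) h4
    omega
  · have := valX_two_nsmul_lt_min (.inr (four_le_valX_two_nsmul h h8)) h8
    omega
  · have := valX_two_nsmul_lt_min (.inr h) h4
    omega

/-- The point `(7/6, 35/72)`, a generator of the factor `ℤ/8ℤ` of the torsion subgroup. -/
def pointA : curve15.Point := .some (7 / 6) (35 / 72) (nonsingular_of_sq_eq (by norm_num))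

/-- The point `(7/16, 0)`, a generator of the factor `ℤ/2ℤ` of the torsion subgroup. -/
def pointB : curve15.Point := .some (7 / 16) 0 (nonsingular_of_sq_eq (by norm_num))

lemma two_nsmul_pointB : 2 • pointB = 0 := two_nsmul_some_eq_zero _

lemma four_nsmul_pointA :
    4 • pointA = .some 1 0 (nonsingular_of_sq_eq (by norm_num)) := by
  obtain ⟨x₂, y₂, h₂, h2A, hx₂⟩ := exists_two_nsmul_some_sub_one_eq
    (nonsingular_of_sq_eq (x := 7 / 6) (y := 35 / 72) (by norm_num)) (by norm_num)
  obtain rfl : x₂ = 2 := by norm_num at hx₂; linarith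
  have hy₂ : y₂ ≠ 0 := by
    rintro rfl
    exact absurd (equation_iff_sq_eq.1 h₂.1) (by norm_num)
  obtain ⟨x₄, y₄, h₄, h4A, hx₄⟩ := exists_two_nsmul_some_sub_one_eq h₂ hy₂
  obtain rfl : x₄ = 1 := by norm_num at hx₄; linarith
  obtain rfl : y₄ = 0 := by simpa using equation_iff_sq_eq.1 h₄.1
  rw [show 4 = 2 * 2 from rfl, mul_nsmul, pointA, h2A, h4A]

lemma addOrderOf_pointA : addOrderOf pointA = 8 := by
  refine addOrderOf_eq_prime_pow (p := 2) (n := 2) ?_ ?_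
  · rw [show 2 ^ 2 = 4 from rfl, four_nsmul_pointA]
    exact Point.some_ne_zero _
  · rw [show 2 ^ (2 + 1) = 4 * 2 from rfl, mul_nsmul, four_nsmul_pointA, two_nsmul_some_eq_zero]

lemma addOrderOf_pointB : addOrderOf pointB = 2 :=
  addOrderOf_eq_prime two_nsmul_pointB (Point.some_ne_zero _)

lemma isSquare_sub_one_of_two_nsmul_eq {h : curve15.Nonsingular x y}
    (hP : 2 • P = .some x y h) : IsSquare (x - 1) :=
  isSquare_sub_of_two_nsmul_eq (equation_iff_sq_eq.2 (by norm_num)) hP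

lemma two_nsmul_ne_pointA (Q : curve15.Point) : 2 • Q ≠ pointA := fun hQ ↦
  absurd (isSquare_sub_one_of_two_nsmul_eq hQ) (by norm_num)

lemma two_nsmul_ne_pointB (Q : curve15.Point) : 2 • Q ≠ pointB := fun hQ ↦
  absurd (isSquare_sub_one_of_two_nsmul_eq hQ) (by norm_num)

lemma two_nsmul_ne_pointB_add_pointA (Q : curve15.Point) : 2 • Q ≠ pointB + pointA := by
  intro hQ
  obtain ⟨x, y, h, hBA, hx⟩ := exists_some_add_some_eq
    (nonsingular_of_sq_eq (x := 7 / 16) (y := 0) (by norm_num))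
    (nonsingular_of_sq_eq (x := 7 / 6) (y := 35 / 72) (by norm_num)) (by norm_num)
  obtain rfl : x = -1 / 2 := by rw [hx]; norm_num [curve15]
  exact absurd (isSquare_sub_one_of_two_nsmul_eq (hQ.trans hBA)) (by norm_num)

lemma pointB_add_four_nsmul_pointA :
    pointB + 4 • pointA = .some (-7 / 9) 0 (nonsingular_of_sq_eq (by norm_num)) := by
  obtain ⟨x, y, h, hBC, hx⟩ := exists_some_add_some_eq
    (nonsingular_of_sq_eq (x := 7 / 16) (y := 0) (by norm_num))
    (nonsingular_of_sq_eq (x := 1) (y := 0) (by norm_num)) (by norm_num)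
  obtain rfl : x = -7 / 9 := by rw [hx]; norm_num [curve15]
  obtain rfl : y = 0 := sq_eq_zero_iff.1 ((equation_iff_sq_eq.1 h.1).trans (by norm_num))
  rw [four_nsmul_pointA, pointB, hBC]

open AddSubgroup in
lemma mem_zmultiples_sup_zmultiples_of_two_nsmul_eq_zero (hP : 2 • P = 0) :
    P ∈ zmultiples pointB ⊔ zmultiples pointA := by
  have hB : pointB ∈ zmultiples pointB ⊔ zmultiples pointA := mem_sup_left (mem_zmultiples _)
  have h4A : 4 • pointA ∈ zmultiples pointB ⊔ zmultiples pointA :=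
    nsmul_mem (mem_sup_right (mem_zmultiples _)) 4
  rcases P with _ | ⟨x, y, h⟩
  · exact zero_mem _
  · obtain rfl : y = 0 := by simpa [two_nsmul_some_eq_zero_iff] using hP
    have hx := equation_iff_sq_eq.1 h.1
    rw [zero_pow two_ne_zero, zero_eq_mul, mul_eq_zero] at hx
    rcases hx with (hx | hx) | hx
    · obtain rfl : x = 1 := by linarith
      exact four_nsmul_pointA ▸ h4A
    · obtain rfl : x = -7 / 9 := by linarith
      exact pointB_add_four_nsmul_pointA ▸ add_mem hB h4A
    · obtain rfl : x = 7 / 16 := by linarith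
      exact hB

open AddSubgroup in
lemma torsion_eq_sup :
    AddCommGroup.torsion curve15.Point = zmultiples pointB ⊔ zmultiples pointA :=
  torsion_eq_zmultiples_sup_zmultiples two_nsmul_ne_pointA two_nsmul_ne_pointB
    two_nsmul_ne_pointB_add_pointA two_nsmul_pointB
    (addOrderOf_pos_iff.1 (addOrderOf_pointA ▸ by norm_num))
    (fun _ ↦ mem_zmultiples_sup_zmultiples_of_two_nsmul_eq_zero)
    (fun _ hP ↦ ⟨3, two_pow_three_nsmul_eq_zero_of_isOfFinAddOrder hP⟩)

end curve15

/-- The set {4/3, −3/4, 7/12} is a rational Diophantine triple, and the induced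
elliptic curve has torsion subgroup over ℚ isomorphic to `ℤ/2ℤ × ℤ/8ℤ`. -/
theorem triple_and_torsion :
    ((∃ q : ℚ, (4/3 : ℚ) * (-3/4) + 1 = q ^ 2) ∧
     (∃ q : ℚ, (4/3 : ℚ) * (7/12) + 1 = q ^ 2) ∧
     (∃ q : ℚ, (-3/4 : ℚ) * (7/12) + 1 = q ^ 2)) ∧
    Nonempty ((AddCommGroup.torsion curve15.Point) ≃+ (ZMod 2 × ZMod 8)) := by
  refine ⟨⟨⟨0, by norm_num⟩, ⟨4 / 3, by norm_num⟩, ⟨3 / 4, by norm_num⟩⟩, ?_⟩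
  obtain ⟨eSum⟩ := nonempty_sup_addEquiv_prod <|
    disjoint_zmultiples_of_two_nsmul_ne curve15.two_nsmul_ne_pointA curve15.two_nsmul_ne_pointB
      curve15.two_nsmul_ne_pointB_add_pointA curve15.two_nsmul_pointB
  obtain ⟨eB⟩ := nonempty_zmultiples_addEquiv_zmod curve15.addOrderOf_pointB
  obtain ⟨eA⟩ := nonempty_zmultiples_addEquiv_zmod curve15.addOrderOf_pointA
  rw [curve15.torsion_eq_sup]
  exact ⟨eSum.trans (eB.prodCongr eA)⟩
end
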